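/- arXiv:1403.5413 — 2 statements merged into one kernel-verified Lean document; each statement's English description precedes it below -/
import Mathlib

section
/- Let f, g : [a;b] → ℝ be regulated functions, let [c;d] ⊆ [a;b], let c = t_0 < t_1 < ... < t_n = d be a partition of [c;d], let ξ_0 = c and let ξ_1, ..., ξ_n satisfy t_{i−1} ≤ ξ_i ≤ t_i for i = 1, ..., n. Set ε_{−1} := sup_{c≤t≤d} |g(d) − g(t)|, and let δ_0 ≥ δ_1 ≥ ... ≥ δ_r ≥ 0 and ε_0 ≥ ε_1 ≥ ... ≥ ε_r ≥ 0 be finite nonincreasing sequences of non-negative reals. Then |Σ_{i=1}^n f(ξ_i)(g(t_i) − g(t_{i−1})) − f(c)·(g(d) − g(c))| ≤ Σ_{k=0}^r 2^k · ε_{k−1} · TV^{δ_k}(f,[c;d]) + Σ_{k=0}^r 2^k · δ_k · TV^{ε_k}(g,[c;d]) + n·δ_r·ε_r. -/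
open Filter Set

/-- Truncated variation of `f` on `[a;b]` with truncation parameter `δ`. -/
noncomputable def truncVar (f : ℝ → ℝ) (δ a b : ℝ) : ENNReal :=
  ⨆ (n : ℕ) (t : Fin (n + 1) → ℝ) (_ : StrictMono t)
    (_ : ∀ i, t i ∈ Set.Icc a b),
    ∑ i : Fin n, ENNReal.ofReal (|f (t i.succ) - f (t i.castSucc)| - δ)

/-- p-variation of `f` on `[a;b]`. -/
noncomputable def pVar (f : ℝ → ℝ) (p a b : ℝ) : ENNReal :=
  ⨆ (n : ℕ) (t : Fin (n + 1) → ℝ) (_ : StrictMono t)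
    (_ : ∀ i, t i ∈ Set.Icc a b),
    ∑ i : Fin n, ENNReal.ofReal (|f (t i.succ) - f (t i.castSucc)| ^ p)

/-- The p-variation norm `(V^p(f,[a;b]))^{1/p}`. -/
noncomputable def pVarNorm (f : ℝ → ℝ) (p a b : ℝ) : ℝ :=
  (pVar f p a b).toReal ^ (1 / p)

/-- Oscillation norm `sup_{a ≤ s < t ≤ b} |f t - f s|`. -/
noncomputable def oscNorm (f : ℝ → ℝ) (a b : ℝ) : ℝ :=
  sSup {x | ∃ s ∈ Set.Icc a b, ∃ t ∈ Set.Icc a b, s < t ∧ x = |f t - f s|}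

/-- Sup norm `sup_{a ≤ t ≤ b} |f t|`. -/
noncomputable def supNorm (f : ℝ → ℝ) (a b : ℝ) : ℝ :=
  sSup {x | ∃ t ∈ Set.Icc a b, x = |f t|}

/-- `I` is the Riemann–Stieltjes integral `∫_a^b f dg`. -/
def RSIntegral (f g : ℝ → ℝ) (a b : ℝ) (I : ℝ) : Prop :=
  ∀ ε > (0 : ℝ), ∃ δ > (0 : ℝ), ∀ (n : ℕ) (t : Fin (n + 1) → ℝ) (ξ : Fin n → ℝ),
    StrictMono t → t 0 = a → t (Fin.last n) = b →
    (∀ i : Fin n, t i.castSucc ≤ ξ i ∧ ξ i ≤ t i.succ) →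
    (∀ i : Fin n, t i.succ - t i.castSucc < δ) →
    |∑ i : Fin n, f (ξ i) * (g (t i.succ) - g (t i.castSucc)) - I| < ε

/-- `f` is regulated on `[a;b]`: all the relevant one-sided limits exist and are finite. -/
def Regulated (f : ℝ → ℝ) (a b : ℝ) : Prop :=
  (∃ L : ℝ, Tendsto f (nhdsWithin a (Set.Ioi a)) (nhds L)) ∧
  (∃ L : ℝ, Tendsto f (nhdsWithin b (Set.Iio b)) (nhds L)) ∧
  ∀ x ∈ Set.Ioo a b,
    (∃ L : ℝ, Tendsto f (nhdsWithin x (Set.Iio x)) (nhds L)) ∧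
    (∃ L : ℝ, Tendsto f (nhdsWithin x (Set.Ioi x)) (nhds L))

/-- `f` and `g` have no common points of discontinuity on `[a;b]`. -/
def NoCommonDiscont (f g : ℝ → ℝ) (a b : ℝ) : Prop :=
  ∀ x ∈ Set.Icc a b,
    ContinuousWithinAt f (Set.Icc a b) x ∨ ContinuousWithinAt g (Set.Icc a b) x

/-! A function that is Lipschitz with respect to `T` up to an additive error `δ` is within `δ / 2`
of a function that is genuinely Lipschitz with respect to `T`, by McShane's formula. Taking for `T`
the running truncated variation of a sequence `x`, this produces for every `δ` a sequence within
`δ / 2` of `x` whose variation is at most the truncated variation `TV^δ(x)`.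

The Riemann–Stieltjes sum of `(x, g)` with its first-order term `x 0 * (g n - g 0)` removed is
bilinear, and is controlled both by `osc x * V(g)` and, after Abel summation, by `V(x) * osc g`.
Subtracting from `f(ξ)` and `g(t)` their approximations at the scales `δ k` and `ε k`, and
telescoping over `k`, gives the estimate: passing from one scale to the next changes the
approximations by sequences of variation at most twice the finer truncated variation, and what is
left at scale `r` has oscillations at most `δ r` and `ε r`. The factor obtained is `2` instead of
`2 ^ k` because the original sequences, not the successive residuals, are approximated each time. -/

section SequenceVariation

variable {E : Type*} [SeminormedAddCommGroup E]

/-- The variation of a sequence over the indices `0, ..., n`. -/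
def seqVar (x : ℕ → E) (n : ℕ) : ℝ := ∑ i ∈ Finset.range n, ‖x (i + 1) - x i‖

theorem seqVar_sub_le (x y : ℕ → E) (n : ℕ) : seqVar (x - y) n ≤ seqVar x n + seqVar y n := by
  rw [seqVar, seqVar, seqVar, ← Finset.sum_add_distrib]
  refine Finset.sum_le_sum fun i _ => ?_
  rw [Pi.sub_apply, Pi.sub_apply, sub_sub_sub_comm]
  exact norm_sub_le _ _

end SequenceVariation

section CentredSum

variable {R : Type*}

/-- The Riemann–Stieltjes sum `∑ x (i + 1) * (g (i + 1) - g i)` over `i < n`, with its first-order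
term `x 0 * (g n - g 0)` removed. -/
def centredSum [NonUnitalRing R] (x g : ℕ → R) (n : ℕ) : R :=
  ∑ i ∈ Finset.range n, (x (i + 1) - x 0) * (g (i + 1) - g i)

theorem centredSum_eq_sub [NonUnitalRing R] (x g : ℕ → R) (n : ℕ) :
    centredSum x g n =
      ∑ i ∈ Finset.range n, x (i + 1) * (g (i + 1) - g i) - x 0 * (g n - g 0) := by
  rw [centredSum, ← Finset.sum_range_sub g, Finset.mul_sum, ← Finset.sum_sub_distrib]
  simp only [sub_mul]

theorem centredSum_eq_sum_by_parts [NonUnitalRing R] (x g : ℕ → R) (n : ℕ) :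
    centredSum x g n = ∑ i ∈ Finset.range n, (x (i + 1) - x i) * (g n - g i) := by
  have boundary := Finset.sum_range_sub (fun i => (x i - x 0) * (g i - g n)) n
  simp only [sub_self, mul_zero, zero_mul] at boundary
  rw [centredSum, ← sub_eq_zero, ← Finset.sum_sub_distrib, ← boundary]
  exact Finset.sum_congr rfl fun i _ => by noncomm_ring

theorem centredSum_eq_add_add [NonUnitalRing R] (x x' g g' : ℕ → R) (n : ℕ) :
    centredSum x g n =
      centredSum (x - x') g n + centredSum x' (g - g') n + centredSum x' g' n := by
  simp only [centredSum, ← Finset.sum_add_distrib, Pi.sub_apply]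
  exact Finset.sum_congr rfl fun i _ => by noncomm_ring

variable [NonUnitalSeminormedRing R] {x x' g g' : ℕ → R} {n : ℕ} {D e : ℝ}

theorem norm_centredSum_le_mul_seqVar (hx : ∀ i ≤ n, ‖x i - x 0‖ ≤ D) :
    ‖centredSum x g n‖ ≤ D * seqVar g n := by
  rw [seqVar, Finset.mul_sum]
  refine norm_sum_le_of_le _ fun i hi => (norm_mul_le _ _).trans ?_
  gcongr
  exact hx _ (Finset.mem_range.1 hi)

theorem norm_centredSum_le_mul_seqVar_left (hg : ∀ i ≤ n, ‖g n - g i‖ ≤ e) :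
    ‖centredSum x g n‖ ≤ e * seqVar x n := by
  rw [centredSum_eq_sum_by_parts, seqVar, Finset.mul_sum]
  refine norm_sum_le_of_le _ fun i hi => (norm_mul_le _ _).trans ?_
  rw [mul_comm]
  gcongr
  exact hg _ (Finset.mem_range.1 hi).le

theorem norm_centredSum_le_mul_mul (hx : ∀ i ≤ n, ‖x i - x 0‖ ≤ D)
    (hg : ∀ i < n, ‖g (i + 1) - g i‖ ≤ e) :
    ‖centredSum x g n‖ ≤ n * D * e := by
  calc ‖centredSum x g n‖ ≤ ∑ _i ∈ Finset.range n, D * e :=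
        norm_sum_le_of_le _ fun i hi => (norm_mul_le _ _).trans <|
          mul_le_mul (hx _ (Finset.mem_range.1 hi)) (hg i (Finset.mem_range.1 hi))
            (norm_nonneg _) ((norm_nonneg _).trans (hx 0 n.zero_le))
    _ = n * D * e := by rw [Finset.sum_const, Finset.card_range, nsmul_eq_mul, mul_assoc]

theorem norm_centredSum_le_add_norm_centredSum (hg : ∀ i ≤ n, ‖g n - g i‖ ≤ e)
    (hx' : ∀ i ≤ n, ‖x' i - x' 0‖ ≤ D) :
    ‖centredSum x g n‖ ≤
      e * seqVar (x - x') n + D * seqVar (g - g') n + ‖centredSum x' g' n‖ := by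
  rw [centredSum_eq_add_add x x' g g']
  refine norm_add₃_le.trans ?_
  gcongr
  · exact norm_centredSum_le_mul_seqVar_left hg
  · exact norm_centredSum_le_mul_seqVar hx'

theorem norm_centredSum_le_sum_scales {X G : ℕ → ℕ → R} {D e : ℕ → ℝ} {m : ℕ}
    (hG : ∀ k < m, ∀ i ≤ n, ‖G k n - G k i‖ ≤ e k)
    (hX : ∀ k < m, ∀ i ≤ n, ‖X (k + 1) i - X (k + 1) 0‖ ≤ D k) :
    ‖centredSum (X 0) (G 0) n‖ ≤
      ∑ k ∈ Finset.range m, e k * seqVar (X k - X (k + 1)) n +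
      ∑ k ∈ Finset.range m, D k * seqVar (G k - G (k + 1)) n + ‖centredSum (X m) (G m) n‖ := by
  induction m with
  | zero => simp
  | succ m ih =>
    have earlier := ih (fun k hk => hG k (by lia)) (fun k hk => hX k (by lia))
    have last_scale := norm_centredSum_le_add_norm_centredSum (x := X m) (g' := G (m + 1))
      (hG m m.lt_succ_self) (hX m m.lt_succ_self)
    rw [Finset.sum_range_succ, Finset.sum_range_succ]
    linarith

end CentredSum

section SequenceTruncatedVariation

variable {M : Type*} [PseudoMetricSpace M]

/-- The truncated variation of a sequence over the indices `0, ..., k`, defined by recursion on the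
last index `j < k` used before `k`; the empty supremum at `k = 0` is `0`. Unlike `truncVar` it is
always finite. -/
noncomputable def seqTruncVar (x : ℕ → M) (δ : ℝ) : ℕ → ℝ
  | k => ⨆ j : Fin k, (seqTruncVar x δ j + max (dist (x k) (x j) - δ) 0)

variable {x : ℕ → M} {δ δ' : ℝ} {j k : ℕ}

theorem seqTruncVar_zero : seqTruncVar x δ 0 = 0 := by
  rw [seqTruncVar, Real.iSup_of_isEmpty]

theorem seqTruncVar_add_le (hjk : j < k) :
    seqTruncVar x δ j + max (dist (x k) (x j) - δ) 0 ≤ seqTruncVar x δ k := by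
  rw [seqTruncVar.eq_1 x δ k]
  exact le_ciSup (f := fun j : Fin k => seqTruncVar x δ j + max (dist (x k) (x j) - δ) 0)
    (Set.finite_range _).bddAbove ⟨j, hjk⟩

theorem exists_seqTruncVar_eq_add (hk : k ≠ 0) :
    ∃ j < k, seqTruncVar x δ k = seqTruncVar x δ j + max (dist (x k) (x j) - δ) 0 := by
  have : Nonempty (Fin k) := ⟨⟨0, Nat.pos_of_ne_zero hk⟩⟩
  obtain ⟨j, hj⟩ := exists_eq_ciSup_of_finite
    (f := fun j : Fin k => seqTruncVar x δ j + max (dist (x k) (x j) - δ) 0)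
  exact ⟨j, j.2, by rw [seqTruncVar.eq_1 x δ k, ← hj]⟩

theorem monotone_seqTruncVar : Monotone (seqTruncVar x δ) :=
  monotone_nat_of_le_succ fun k =>
    (le_add_of_nonneg_right (le_max_right _ _)).trans (seqTruncVar_add_le k.lt_succ_self)

theorem seqTruncVar_nonneg : 0 ≤ seqTruncVar x δ k :=
  seqTruncVar_zero.symm.trans_le (monotone_seqTruncVar k.zero_le)

theorem seqTruncVar_anti (h : δ' ≤ δ) : seqTruncVar x δ k ≤ seqTruncVar x δ' k := by
  induction k using Nat.strong_induction_on with
  | _ k ih =>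
    rcases eq_or_ne k 0 with rfl | hk
    · rw [seqTruncVar_zero, seqTruncVar_zero]
    · obtain ⟨j, hj, hjk⟩ := exists_seqTruncVar_eq_add (x := x) (δ := δ) hk
      calc seqTruncVar x δ k = seqTruncVar x δ j + max (dist (x k) (x j) - δ) 0 := hjk
        _ ≤ seqTruncVar x δ' j + max (dist (x k) (x j) - δ') 0 := by gcongr; exact ih j hj
        _ ≤ seqTruncVar x δ' k := seqTruncVar_add_le hj

theorem dist_le_dist_seqTruncVar_add (hδ : 0 ≤ δ) (i j : ℕ) :
    dist (x i) (x j) ≤ dist (seqTruncVar x δ i) (seqTruncVar x δ j) + δ := by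
  wlog hij : j ≤ i generalizing i j
  · rw [dist_comm (x i), dist_comm (seqTruncVar x δ i)]
    exact this j i (le_of_not_ge hij)
  rcases hij.eq_or_lt with rfl | hij
  · simpa using hδ
  · have step := seqTruncVar_add_le (x := x) (δ := δ) hij
    rw [Real.dist_eq]
    linarith [le_max_left (dist (x i) (x j) - δ) 0,
      le_abs_self (seqTruncVar x δ i - seqTruncVar x δ j)]

end SequenceTruncatedVariation

section Approximation

-- McShane's formula `y i = ⨅ j, (x j + δ / 2 + dist (T i) (T j))`: the index `j = i` gives
-- `y i ≤ x i + δ / 2`, the hypothesis gives `x i - δ / 2 ≤ y i`.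
theorem exists_lipschitz_approx {α M : Type*} [PseudoMetricSpace M] {T : α → M} {x : α → ℝ} {δ : ℝ}
    (hx : ∀ i j, dist (x i) (x j) ≤ dist (T i) (T j) + δ) :
    ∃ y : α → ℝ, (∀ i, dist (x i) (y i) ≤ δ / 2) ∧ ∀ i j, dist (y i) (y j) ≤ dist (T i) (T j) := by
  let y : α → ℝ := fun i => ⨅ j, (x j + δ / 2 + dist (T i) (T j))
  have lower : ∀ i j, x i - δ / 2 ≤ x j + δ / 2 + dist (T i) (T j) := fun i j => by
    linarith [le_abs_self (x i - x j), Real.dist_eq (x i) (x j) ▸ hx i j]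
  have y_le : ∀ i j, y i ≤ x j + δ / 2 + dist (T i) (T j) := fun i =>
    ciInf_le ⟨x i - δ / 2, Set.forall_mem_range.2 (lower i)⟩
  have y_le_add : ∀ i j, y i ≤ y j + dist (T i) (T j) := fun i j => by
    have : Nonempty α := ⟨i⟩
    rw [← sub_le_iff_le_add]
    refine le_ciInf fun k => ?_
    linarith [y_le i k, dist_triangle (T i) (T j) (T k)]
  refine ⟨y, fun i => ?_, fun i j => ?_⟩
  · have : Nonempty α := ⟨i⟩
    have le_y : x i - δ / 2 ≤ y i := le_ciInf (lower i)
    have y_le_self := y_le i i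
    rw [dist_self] at y_le_self
    rw [Real.dist_eq, abs_le]
    constructor <;> linarith
  · rw [Real.dist_eq, abs_le]
    constructor <;> linarith [y_le_add i j, y_le_add j i, dist_comm (T i) (T j)]

theorem exists_approx_seqVar_le_seqTruncVar (x : ℕ → ℝ) {δ : ℝ} (hδ : 0 ≤ δ) :
    ∃ y : ℕ → ℝ, (∀ i, dist (x i) (y i) ≤ δ / 2) ∧ ∀ n, seqVar y n ≤ seqTruncVar x δ n := by
  obtain ⟨y, hxy, hy⟩ := exists_lipschitz_approx (dist_le_dist_seqTruncVar_add (x := x) hδ)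
  refine ⟨y, hxy, fun n => ?_⟩
  calc seqVar y n
      ≤ ∑ i ∈ Finset.range n, (seqTruncVar x δ (i + 1) - seqTruncVar x δ i) :=
        Finset.sum_le_sum fun i _ => (hy (i + 1) i).trans_eq <|
          abs_of_nonneg (sub_nonneg.2 (monotone_seqTruncVar i.le_succ))
    _ = seqTruncVar x δ n := by rw [Finset.sum_range_sub, seqTruncVar_zero, sub_zero]

theorem exists_residuals (x : ℕ → ℝ) {r : ℕ} {δ : ℕ → ℝ} (hδ : AntitoneOn δ (Iic r))
    (hδr : 0 ≤ δ r) :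
    ∃ X : ℕ → ℕ → ℝ, X 0 = x ∧ (∀ k ≤ r, ∀ i j, ‖X (k + 1) i - X (k + 1) j‖ ≤ δ k) ∧
      ∀ k ≤ r, ∀ n, seqVar (X k - X (k + 1)) n ≤ 2 ^ min k 1 * seqTruncVar x (δ k) n := by
  have δ_nonneg : ∀ k ≤ r, 0 ≤ δ k := fun k hk => hδr.trans (hδ hk self_mem_Iic hk)
  choose! y hxy hy using fun k (hk : k ≤ r) =>
    exists_approx_seqVar_le_seqTruncVar x (δ_nonneg k hk)
  refine ⟨fun | 0 => x | k + 1 => x - y k, rfl, fun k hk i j => ?_, ?_⟩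
  · calc ‖(x i - y k i) - (x j - y k j)‖ ≤ δ k / 2 + δ k / 2 :=
          norm_sub_le_of_le (hxy k hk i) (hxy k hk j)
      _ = δ k := add_halves _
  · rintro (_ | k) hk n
    · simpa using hy 0 hk n
    · calc seqVar ((x - y k) - (x - y (k + 1))) n = seqVar (y (k + 1) - y k) n := by
            rw [sub_sub_sub_cancel_left]
        _ ≤ seqTruncVar x (δ (k + 1)) n + seqTruncVar x (δ k) n :=
            (seqVar_sub_le _ _ n).trans (add_le_add (hy _ hk n) (hy k (by lia) n))
        _ ≤ seqTruncVar x (δ (k + 1)) n + seqTruncVar x (δ (k + 1)) n := by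
            gcongr
            exact seqTruncVar_anti (hδ (show k ≤ r by lia) hk k.le_succ)
        _ = 2 ^ min (k + 1) 1 * seqTruncVar x (δ (k + 1)) n := by
            rw [min_eq_right k.succ_pos, pow_one, two_mul]

theorem norm_centredSum_le_sum_seqTruncVar {x g : ℕ → ℝ} {n r : ℕ} {δ ε : ℕ → ℝ} {e : ℝ}
    (hδ : AntitoneOn δ (Iic r)) (hδr : 0 ≤ δ r) (hε : AntitoneOn ε (Iic r)) (hεr : 0 ≤ ε r)
    (hg : ∀ i ≤ n, ‖g n - g i‖ ≤ e) :
    ‖centredSum x g n‖ ≤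
      ∑ k ∈ Finset.range (r + 1),
        2 ^ min k 1 * (if k = 0 then e else ε (k - 1)) * seqTruncVar x (δ k) n +
      ∑ k ∈ Finset.range (r + 1), 2 ^ min k 1 * δ k * seqTruncVar g (ε k) n +
      n * δ r * ε r := by
  obtain ⟨X, rfl, X_osc, X_var⟩ := exists_residuals x hδ hδr
  obtain ⟨G, rfl, G_osc, G_var⟩ := exists_residuals g hε hεr
  have G_bound : ∀ k ≤ r, ∀ i ≤ n, ‖G k n - G k i‖ ≤ if k = 0 then e else ε (k - 1) := by
    rintro (_ | k) hk i hi
    · exact hg i hi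
    · exact G_osc k (by lia) n i
  have X_term : ∀ k ≤ r, (if k = 0 then e else ε (k - 1)) * seqVar (X k - X (k + 1)) n ≤
      2 ^ min k 1 * (if k = 0 then e else ε (k - 1)) * seqTruncVar (X 0) (δ k) n := fun k hk => by
    rw [mul_comm (2 ^ _), mul_assoc]
    exact mul_le_mul_of_nonneg_left (X_var k hk n)
      ((norm_nonneg _).trans (G_bound k hk n le_rfl))
  have G_term : ∀ k ≤ r, δ k * seqVar (G k - G (k + 1)) n ≤
      2 ^ min k 1 * δ k * seqTruncVar (G 0) (ε k) n := fun k hk => by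
    rw [mul_comm (2 ^ _), mul_assoc]
    exact mul_le_mul_of_nonneg_left (G_var k hk n) ((norm_nonneg _).trans (X_osc k hk 0 0))
  calc ‖centredSum (X 0) (G 0) n‖
      ≤ _ := norm_centredSum_le_sum_scales (m := r + 1)
        (fun k hk => G_bound k (Nat.le_of_lt_succ hk))
        (fun k hk i _ => X_osc k (Nat.le_of_lt_succ hk) i 0)
    _ ≤ _ := add_le_add_three
        (Finset.sum_le_sum fun k hk => X_term k (Finset.mem_range_succ_iff.1 hk))
        (Finset.sum_le_sum fun k hk => G_term k (Finset.mem_range_succ_iff.1 hk))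
        (norm_centredSum_le_mul_mul (fun i _ => X_osc r le_rfl i 0)
          fun i _ => G_osc r le_rfl (i + 1) i)

end Approximation

section TruncatedVariation

theorem strictMono_snoc {α : Type*} [Preorder α] {m : ℕ} {s : Fin (m + 1) → α} {u : α}
    (hs : StrictMono s) (hu : s (Fin.last m) < u) :
    StrictMono (Fin.snoc s u : Fin (m + 2) → α) := by
  refine Fin.strictMono_iff_lt_succ.2 (Fin.lastCases ?_ fun i => ?_)
  · simpa only [Fin.snoc_castSucc, Fin.succ_last, Fin.snoc_last] using hu
  · simpa only [Fin.snoc_castSucc, Fin.succ_castSucc] using hs Fin.castSucc_lt_succ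

variable {f : ℝ → ℝ} {δ c d : ℝ} {p : ℕ → ℝ}

theorem exists_strictMono_seqTruncVar_le_sum (f : ℝ → ℝ) (hδ : 0 ≤ δ) (hp : Monotone p) (k : ℕ) :
    ∃ (m : ℕ) (s : Fin (m + 1) → ℝ), StrictMono s ∧ (∀ i, s i ∈ Set.range p) ∧
      s (Fin.last m) = p k ∧
      ENNReal.ofReal (seqTruncVar (f ∘ p) δ k) ≤
        ∑ i : Fin m, ENNReal.ofReal (|f (s i.succ) - f (s i.castSucc)| - δ) := by
  induction k using Nat.strong_induction_on with
  | _ k ih =>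
    rcases eq_or_ne k 0 with rfl | hk
    · exact ⟨0, fun _ => p 0, Subsingleton.strictMono (α := Fin 1) _, fun _ => ⟨0, rfl⟩, rfl,
        by simp [seqTruncVar_zero]⟩
    obtain ⟨j, hjk, hj⟩ := exists_seqTruncVar_eq_add (x := f ∘ p) (δ := δ) hk
    obtain ⟨m, s, hs, s_mem, s_last, hsum⟩ := ih j hjk
    rcases (hp hjk.le).eq_or_lt with hpjk | hpjk
    · refine ⟨m, s, hs, s_mem, s_last.trans hpjk, hsum.trans' ?_⟩
      simp [hj, hpjk, hδ]
    · refine ⟨m + 1, Fin.snoc s (p k), strictMono_snoc hs (s_last.trans_lt hpjk),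
        Fin.lastCases (by simp) fun i => by simpa using s_mem i, Fin.snoc_last .., ?_⟩
      rw [hj, ENNReal.ofReal_add seqTruncVar_nonneg (le_max_right _ _), Fin.sum_univ_castSucc]
      simp only [Fin.snoc_castSucc, Fin.succ_last, Fin.snoc_last, Fin.succ_castSucc, s_last]
      gcongr ?_ + ?_
      simp [Real.dist_eq, ENNReal.ofReal_max]

theorem ofReal_seqTruncVar_le_truncVar (hδ : 0 ≤ δ) (hp : Monotone p)
    (hp_mem : ∀ i, p i ∈ Icc c d) (k : ℕ) :
    ENNReal.ofReal (seqTruncVar (f ∘ p) δ k) ≤ truncVar f δ c d := by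
  obtain ⟨m, s, hs, s_mem, -, hsum⟩ := exists_strictMono_seqTruncVar_le_sum f hδ hp k
  have s_mem_Icc : ∀ i, s i ∈ Icc c d := fun i => (range_subset_iff.2 hp_mem) (s_mem i)
  exact hsum.trans (le_iSup₂_of_le m s (le_iSup₂_of_le hs s_mem_Icc le_rfl))

theorem ofReal_sum_seqTruncVar_le {r : ℕ} {w δ : ℕ → ℝ} (hw : ∀ k ≤ r, 0 ≤ w k)
    (hδ : ∀ k ≤ r, 0 ≤ δ k) (hp : Monotone p) (hp_mem : ∀ i, p i ∈ Icc c d) (n : ℕ) :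
    ENNReal.ofReal (∑ k ∈ Finset.range (r + 1), w k * seqTruncVar (f ∘ p) (δ k) n) ≤
      ∑ k ∈ Finset.range (r + 1), ENNReal.ofReal (w k) * truncVar f (δ k) c d := by
  rw [ENNReal.ofReal_sum_of_nonneg fun k hk =>
    mul_nonneg (hw k (Finset.mem_range_succ_iff.1 hk)) seqTruncVar_nonneg]
  gcongr with k hk
  rw [ENNReal.ofReal_mul (hw k (Finset.mem_range_succ_iff.1 hk))]
  gcongr
  exact ofReal_seqTruncVar_le_truncVar (hδ k (Finset.mem_range_succ_iff.1 hk)) hp hp_mem n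

end TruncatedVariation

theorem ofReal_abs_centredSum_le_sum_truncVar {f g : ℝ → ℝ} {p q : ℕ → ℝ} {c d e : ℝ} {n r : ℕ}
    {δ ε : ℕ → ℝ} (hp : Monotone p) (hp_mem : ∀ i, p i ∈ Icc c d)
    (hq : Monotone q) (hq_mem : ∀ i, q i ∈ Icc c d) (hqn : q n = d)
    (hδ : AntitoneOn δ (Iic r)) (hδr : 0 ≤ δ r) (hε : AntitoneOn ε (Iic r)) (hεr : 0 ≤ ε r)
    (he : ∀ s ∈ Icc c d, |g d - g s| ≤ e) :
    ENNReal.ofReal |centredSum (f ∘ p) (g ∘ q) n| ≤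
      (∑ k ∈ Finset.range (r + 1),
          ENNReal.ofReal ((2 : ℝ) ^ min k 1 * (if k = 0 then e else ε (k - 1))) *
            truncVar f (δ k) c d) +
        (∑ k ∈ Finset.range (r + 1),
          ENNReal.ofReal ((2 : ℝ) ^ min k 1 * δ k) * truncVar g (ε k) c d) +
        ENNReal.ofReal ((n : ℝ) * δ r * ε r) := by
  have δ_nonneg : ∀ k ≤ r, 0 ≤ δ k := fun k hk => hδr.trans (hδ hk self_mem_Iic hk)
  have ε_nonneg : ∀ k ≤ r, 0 ≤ ε k := fun k hk => hεr.trans (hε hk self_mem_Iic hk)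
  have bound_nonneg : ∀ k ≤ r, 0 ≤ if k = 0 then e else ε (k - 1) := by
    rintro (_ | k) hk
    · exact (abs_nonneg _).trans (he _ (hq_mem 0))
    · exact ε_nonneg k (by lia)
  have discrete := norm_centredSum_le_sum_seqTruncVar (x := f ∘ p) (g := g ∘ q) (n := n)
    hδ hδr hε hεr fun i _ => by
      simpa only [Function.comp_apply, hqn, Real.norm_eq_abs] using he _ (hq_mem i)
  refine (ENNReal.ofReal_le_ofReal discrete).trans <| ENNReal.ofReal_add_le.trans ?_
  gcongr
  refine ENNReal.ofReal_add_le.trans ?_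
  gcongr
  · exact ofReal_sum_seqTruncVar_le (fun k hk => mul_nonneg (by positivity) (bound_nonneg k hk))
      δ_nonneg hp hp_mem n
  · exact ofReal_sum_seqTruncVar_le (fun k hk => mul_nonneg (by positivity) (δ_nonneg k hk))
      ε_nonneg hq hq_mem n

theorem sum_fin_eq_centredSum_clamp {α β R : Type*} [NonUnitalRing R] (f : α → R) (g : β → R)
    {n : ℕ} (ξ : Fin (n + 1) → α) (t : Fin (n + 1) → β) :
    ∑ i : Fin n, f (ξ i.succ) * (g (t i.succ) - g (t i.castSucc)) -
        f (ξ 0) * (g (t (Fin.last n)) - g (t 0)) =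
      centredSum (f ∘ fun i => ξ (Fin.clamp i n)) (g ∘ fun i => t (Fin.clamp i n)) n := by
  have clamp_zero : Fin.clamp 0 n = 0 := by ext; simp
  have clamp_castSucc : ∀ i : Fin n, Fin.clamp i n = i.castSucc := fun i => by ext; simp
  have clamp_succ : ∀ i : Fin n, Fin.clamp (i + 1) n = i.succ := fun i => by ext; simp
  simp only [centredSum_eq_sub, Finset.sum_range, Function.comp_apply, clamp_zero,
    clamp_castSucc, clamp_succ, Fin.clamp_eq_last n n le_rfl]

theorem rs_sum_estimate'_general {c d e : ℝ} {f g : ℝ → ℝ} {n : ℕ} {t ξ : Fin (n + 1) → ℝ}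
    (ht : Monotone t) (ht0 : t 0 = c) (htn : t (Fin.last n) = d)
    (hξ : Monotone ξ) (hξ0 : ξ 0 = c) (hξn : ξ (Fin.last n) ≤ d) {r : ℕ} {δ ε : ℕ → ℝ}
    (hδ : AntitoneOn δ (Iic r)) (hδr : 0 ≤ δ r) (hε : AntitoneOn ε (Iic r)) (hεr : 0 ≤ ε r)
    (he : ∀ s ∈ Icc c d, |g d - g s| ≤ e) :
    ENNReal.ofReal
        |∑ i : Fin n, f (ξ i.succ) * (g (t i.succ) - g (t i.castSucc)) - f c * (g d - g c)| ≤
      (∑ k ∈ Finset.range (r + 1),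
          ENNReal.ofReal ((2 : ℝ) ^ min k 1 * (if k = 0 then e else ε (k - 1))) *
            truncVar f (δ k) c d) +
        (∑ k ∈ Finset.range (r + 1),
          ENNReal.ofReal ((2 : ℝ) ^ min k 1 * δ k) * truncVar g (ε k) c d) +
        ENNReal.ofReal ((n : ℝ) * δ r * ε r) := by
  have t_mem : ∀ i, t i ∈ Icc c d := fun i =>
    ⟨ht0.symm.trans_le (ht i.zero_le), (ht i.le_last).trans_eq htn⟩
  have ξ_mem : ∀ i, ξ i ∈ Icc c d := fun i =>
    ⟨hξ0.symm.trans_le (hξ i.zero_le), (hξ i.le_last).trans hξn⟩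
  have rs_eq := sum_fin_eq_centredSum_clamp f g ξ t
  rw [hξ0, ht0, htn] at rs_eq
  rw [rs_eq]
  exact ofReal_abs_centredSum_le_sum_truncVar (hξ.comp Fin.clamp_monotone) (fun _ => ξ_mem _)
    (ht.comp Fin.clamp_monotone) (fun _ => t_mem _)
    ((congrArg t (Fin.clamp_eq_last n n le_rfl)).trans htn) hδ hδr hε hεr he

section Tags

variable {α : Type*} [Preorder α] {n : ℕ} {t ξ : Fin (n + 1) → α}

theorem tag_le_node (h0 : ξ 0 = t 0) (hξ : ∀ i : Fin n, ξ i.succ ≤ t i.succ) : ξ ≤ t :=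
  Fin.cases h0.le hξ

theorem monotone_tags (h0 : ξ 0 = t 0)
    (hξ : ∀ i : Fin n, t i.castSucc ≤ ξ i.succ ∧ ξ i.succ ≤ t i.succ) : Monotone ξ :=
  Fin.monotone_iff_le_succ.2 fun i =>
    (tag_le_node h0 (fun j => (hξ j).2) i.castSucc).trans (hξ i).1

end Tags

namespace Regulated

variable {g : ℝ → ℝ} {a b c d : ℝ}

theorem exists_mem_nhdsWithin_isBounded_image (hg : Regulated g a b) {x : ℝ} (hx : x ∈ Icc a b) :
    ∃ s ∈ nhdsWithin x (Icc a b), Bornology.IsBounded (g '' s) := by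
  obtain ⟨⟨A, hA⟩, ⟨B, hB⟩, hAB⟩ := hg
  have left : ∃ L, Tendsto g (nhdsWithin x (Icc a b ∩ Iio x)) (nhds L) := by
    rcases hx.1.eq_or_lt with rfl | hax
    · have empty : Icc a b ∩ Iio a = ∅ := by grind
      exact ⟨0, by rw [empty, nhdsWithin_empty]; exact tendsto_bot⟩
    rcases hx.2.eq_or_lt with rfl | hxb
    · exact ⟨B, hB.mono_left (nhdsWithin_mono _ inter_subset_right)⟩
    · exact (hAB x ⟨hax, hxb⟩).1.imp fun _ hL =>
        hL.mono_left (nhdsWithin_mono _ inter_subset_right)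
  have right : ∃ L, Tendsto g (nhdsWithin x (Icc a b ∩ Ioi x)) (nhds L) := by
    rcases hx.2.eq_or_lt with rfl | hxb
    · have empty : Icc a x ∩ Ioi x = ∅ := by grind
      exact ⟨0, by rw [empty, nhdsWithin_empty]; exact tendsto_bot⟩
    rcases hx.1.eq_or_lt with rfl | hax
    · exact ⟨A, hA.mono_left (nhdsWithin_mono _ inter_subset_right)⟩
    · exact (hAB x ⟨hax, hxb⟩).2.imp fun _ hL =>
        hL.mono_left (nhdsWithin_mono _ inter_subset_right)
  obtain ⟨L, hL⟩ := left
  obtain ⟨R, hR⟩ := right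
  obtain ⟨s, hs, hgs⟩ := Metric.exists_isBounded_image_of_tendsto hL
  obtain ⟨u, hu, hgu⟩ := Metric.exists_isBounded_image_of_tendsto hR
  have split : Icc a b ⊆ (Icc a b ∩ Iio x) ∪ (Icc a b ∩ Ioi x) ∪ {x} := by grind
  refine ⟨s ∪ u ∪ {x}, nhdsWithin_mono x split ?_, ?_⟩
  · rw [nhdsWithin_union, nhdsWithin_union, nhdsWithin_singleton]
    exact union_mem_sup (union_mem_sup hs hu) (mem_pure.2 rfl)
  · rw [image_union, image_union, image_singleton]
    exact (hgs.union hgu).union Bornology.isBounded_singleton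

theorem isBounded_image (hg : Regulated g a b) : Bornology.IsBounded (g '' Icc a b) :=
  isCompact_Icc.induction_on (p := fun s => Bornology.IsBounded (g '' s)) (by simp)
    (fun _ _ hst ht => ht.subset (image_mono hst))
    (fun s u hs hu => image_union g s u ▸ hs.union hu)
    fun _ hx => hg.exists_mem_nhdsWithin_isBounded_image hx

theorem bddAbove_abs_sub (hg : Regulated g a b) (hac : a ≤ c) (hcd : c ≤ d) (hdb : d ≤ b) :
    BddAbove {x | ∃ s ∈ Icc c d, x = |g d - g s|} := by
  obtain ⟨C, hC⟩ := Metric.isBounded_iff.1 hg.isBounded_image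
  refine ⟨C, ?_⟩
  rintro _ ⟨s, hs, rfl⟩
  exact hC (mem_image_of_mem g ⟨hac.trans hcd, hdb⟩)
    (mem_image_of_mem g ⟨hac.trans hs.1, hs.2.trans hdb⟩)

end Regulated

theorem ofReal_two_pow_min_one_mul_le (k : ℕ) (w : ℝ) :
    ENNReal.ofReal (2 ^ min k 1 * w) ≤ ENNReal.ofReal (2 ^ k * w) := by
  rw [ENNReal.ofReal_mul (by positivity), ENNReal.ofReal_mul (by positivity)]
  gcongr
  exacts [one_le_two, min_le_left k 1]

/-- Remark 2 (symmetric version of Lemma 1): estimate for Riemann–Stieltjes sums. -/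
theorem rs_sum_estimate'
    (a b c d : ℝ) (hac : a ≤ c) (hcd : c ≤ d) (hdb : d ≤ b)
    (f g : ℝ → ℝ) (hf : Regulated f a b) (hg : Regulated g a b)
    (n : ℕ) (t : Fin (n + 1) → ℝ) (ht : StrictMono t)
    (ht0 : t 0 = c) (htn : t (Fin.last n) = d)
    (ξ : Fin (n + 1) → ℝ) (hξ0 : ξ 0 = c)
    (hξ : ∀ i : Fin n, t i.castSucc ≤ ξ i.succ ∧ ξ i.succ ≤ t i.succ)
    (r : ℕ) (δ ε : ℕ → ℝ)
    (hδnn : ∀ k ≤ r, 0 ≤ δ k) (hεnn : ∀ k ≤ r, 0 ≤ ε k)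
    (hδa : ∀ k < r, δ (k + 1) ≤ δ k) (hεa : ∀ k < r, ε (k + 1) ≤ ε k)
    (εm1 : ℝ) (hεm1 : εm1 = sSup {x | ∃ s ∈ Set.Icc c d, x = |g d - g s|}) :
    ENNReal.ofReal
        |∑ i : Fin n, f (ξ i.succ) * (g (t i.succ) - g (t i.castSucc)) -
          f c * (g d - g c)|
      ≤ (∑ k ∈ Finset.range (r + 1),
            ENNReal.ofReal ((2 : ℝ) ^ k * (if k = 0 then εm1 else ε (k - 1))) *
              truncVar f (δ k) c d)
        + (∑ k ∈ Finset.range (r + 1),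
            ENNReal.ofReal ((2 : ℝ) ^ k * δ k) * truncVar g (ε k) c d)
        + ENNReal.ofReal ((n : ℝ) * δ r * ε r) := by
  have he : ∀ s ∈ Icc c d, |g d - g s| ≤ εm1 := fun s hs =>
    hεm1 ▸ le_csSup (hg.bddAbove_abs_sub hac hcd hdb) ⟨s, hs, rfl⟩
  refine (rs_sum_estimate'_general ht.monotone ht0 htn
    (monotone_tags (hξ0.trans ht0.symm) hξ) hξ0
    ((tag_le_node (hξ0.trans ht0.symm) (fun i => (hξ i).2) _).trans_eq htn)
    (antitoneOn_of_succ_le ordConnected_Iic fun k _ _ hk => hδa k hk) (hδnn r le_rfl)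
    (antitoneOn_of_succ_le ordConnected_Iic fun k _ _ hk => hεa k hk) (hεnn r le_rfl) he).trans ?_
  gcongr ?_ + ?_ + _
  all_goals
    refine Finset.sum_le_sum fun k _ => ?_
    gcongr ?_ * _
    exact ofReal_two_pow_min_one_mul_le k _
end

section
/- Let a < b and let f, g : [a;b] → ℝ be functions with no common points of discontinuity. If f has finite p-variation and g has finite q-variation on [a;b], where p > 1, q > 1 and 1/p + 1/q > 1, then the Riemann–Stieltjes integral ∫_a^b f dg exists. -/
open Filter Set

/-!
Superadditivity of the `p`- and `q`-variation gives a single monotone `F` with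
`|f y - f x| ≤ (F y - F x) ^ (1 / p)` and `|g y - g x| ≤ (F y - F x) ^ (1 / q)` for `x ≤ y`, so over
`[x, y]` an increment of `f` times an increment of `g` is at most `(F y - F x) ^ (1 / p + 1 / q)`.
As `f` and `g` share no discontinuity, compactness makes these products uniformly small on short
intervals; interpolation gives the bound `ε * (F y - F x) ^ θ` with `ε` arbitrarily small and
`1 < θ < 1 / p + 1 / q`. By sewing (Young's estimate), passing to a refinement changes a
Riemann–Stieltjes sum over a fine partition by at most a constant times `ε`. Comparing two fine
partitions with their common refinement shows that the sums satisfy the Cauchy criterion.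
-/

lemma exists_le_le_succ {α : Type*} [LinearOrder α] {φ : ℕ → α} {c : α} {i k : ℕ} (hik : i < k)
    (hi : φ i ≤ c) (hk : c ≤ φ k) : ∃ j, i ≤ j ∧ j < k ∧ φ j ≤ c ∧ c ≤ φ (j + 1) := by
  induction k, hik using Nat.le_induction with
  | base => exact ⟨i, le_rfl, i.lt_succ_self, hi, hk⟩
  | succ k hik ih =>
    rcases le_total c (φ k) with hc | hc
    · obtain ⟨j, hij, hjk, hj⟩ := ih hc
      exact ⟨j, hij, hjk.trans k.lt_succ_self, hj⟩
    · exact ⟨k, Nat.le_of_succ_le hik, k.lt_succ_self, hc, hk⟩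

lemma sum_sub_rpow_le_sub_rpow {φ : ℕ → ℝ} (hφ : Monotone φ) {θ : ℝ} (hθ : 1 ≤ θ) (n : ℕ) :
    ∑ i ∈ Finset.range n, (φ (i + 1) - φ i) ^ θ ≤ (φ n - φ 0) ^ θ := by
  induction n with
  | zero => simpa using Real.rpow_nonneg le_rfl θ
  | succ n ih =>
    have h₀ : 0 ≤ φ n - φ 0 := sub_nonneg.2 (hφ n.zero_le)
    have h₁ : 0 ≤ φ (n + 1) - φ n := sub_nonneg.2 (hφ n.le_succ)
    calc ∑ i ∈ Finset.range (n + 1), (φ (i + 1) - φ i) ^ θ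
        ≤ (φ n - φ 0) ^ θ + (φ (n + 1) - φ n) ^ θ := by
          rw [Finset.sum_range_succ]
          gcongr
      _ ≤ (φ n - φ 0 + (φ (n + 1) - φ n)) ^ θ := Real.add_rpow_le_rpow_add h₀ h₁ hθ
      _ = (φ (n + 1) - φ 0) ^ θ := by ring_nf

lemma le_rpow_mul_rpow_of_le_of_le_rpow {x η y σ l : ℝ} (hx : 0 ≤ x) (hy : 0 ≤ y) (hl₀ : 0 ≤ l)
    (hl₁ : l ≤ 1) (hη : x ≤ η) (hσ : x ≤ y ^ σ) : x ≤ η ^ (1 - l) * y ^ (σ * l) :=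
  calc x = x ^ (1 - l) * x ^ l := by
        rw [← Real.rpow_add_of_nonneg hx (sub_nonneg.2 hl₁) hl₀, sub_add_cancel, Real.rpow_one]
    _ ≤ η ^ (1 - l) * (y ^ σ) ^ l := by
        have := sub_nonneg.2 hl₁
        have := hx.trans hη
        gcongr
    _ = η ^ (1 - l) * y ^ (σ * l) := by rw [Real.rpow_mul hy]

/-- The constant of the discrete sewing estimate with exponent `θ > 1`. -/
noncomputable def sewingConst (θ : ℝ) : ℝ := 2 / (1 - 2 ^ (1 - θ))

lemma one_sub_two_rpow_pos {θ : ℝ} (hθ : 1 < θ) : 0 < 1 - (2 : ℝ) ^ (1 - θ) :=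
  sub_pos.2 (Real.rpow_lt_one_of_one_lt_of_neg one_lt_two (sub_neg.2 hθ))

lemma sewingConst_pos {θ : ℝ} (hθ : 1 < θ) : 0 < sewingConst θ :=
  div_pos two_pos (one_sub_two_rpow_pos hθ)

lemma two_mul_sewingConst_mul_half_rpow_add {θ : ℝ} (hθ : 1 < θ) {ω : ℝ} (hω : 0 ≤ ω) :
    2 * (sewingConst θ * (ω / 2) ^ θ) + 2 * ω ^ θ = sewingConst θ * ω ^ θ := by
  have hden := (one_sub_two_rpow_pos hθ).ne'
  have hhalf : 2 * (ω / 2) ^ θ = 2 ^ (1 - θ) * ω ^ θ := by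
    rw [Real.div_rpow hω zero_le_two, Real.rpow_sub two_pos, Real.rpow_one]
    ring
  rw [mul_left_comm, hhalf, sewingConst]
  field_simp
  ring

/- The interval is cut at an index `j` splitting the increment of `φ` into halves: `[i, j]` and
`[j + 1, k]` then each contribute at most `2 ^ (-θ)` times the bound being proved. -/
theorem norm_sub_sum_Ico_le_of_norm_sub_sub_le {E : Type*} [SeminormedAddCommGroup E]
    {A : ℕ → ℕ → E} {φ : ℕ → ℝ} {C θ : ℝ} (hφ : Monotone φ) (hC : 0 ≤ C) (hθ : 1 < θ)
    (hA : ∀ i j k, i ≤ j → j ≤ k → ‖A i k - A i j - A j k‖ ≤ C * (φ k - φ i) ^ θ)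
    {i k : ℕ} (hik : i ≤ k) :
    ‖A i k - ∑ l ∈ Finset.Ico i k, A l (l + 1)‖ ≤ C * (sewingConst θ * (φ k - φ i) ^ θ) := by
  induction hn : k - i using Nat.strong_induction_on generalizing i k with
  | _ n ih =>
    subst hn
    rcases hik.eq_or_lt with rfl | hlt
    · simpa [Real.zero_rpow (zero_lt_one.trans hθ).ne'] using hA i i i le_rfl le_rfl
    have hK := (sewingConst_pos hθ).le
    have hω : 0 ≤ φ k - φ i := sub_nonneg.2 (hφ hik)
    obtain ⟨j, hij, hjk, hleft, hright⟩ :=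
      exists_le_le_succ (φ := φ) (c := (φ i + φ k) / 2) hlt (by linarith) (by linarith)
    have hsplit : A i k - ∑ l ∈ Finset.Ico i k, A l (l + 1)
        = (A i j - ∑ l ∈ Finset.Ico i j, A l (l + 1))
          + (A (j + 1) k - ∑ l ∈ Finset.Ico (j + 1) k, A l (l + 1))
          + (A i k - A i j - A j k) + (A j k - A j (j + 1) - A (j + 1) k) := by
      rw [← Finset.sum_Ico_consecutive _ hij hjk.le, Finset.sum_eq_sum_Ico_succ_bot hjk]
      abel
    have ih_half : ∀ {i' k'}, i' ≤ k' → k' - i' < k - i → φ k' - φ i' ≤ (φ k - φ i) / 2 →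
        ‖A i' k' - ∑ l ∈ Finset.Ico i' k', A l (l + 1)‖
          ≤ C * (sewingConst θ * ((φ k - φ i) / 2) ^ θ) := by
      intro i' k' hle hlt hhalf
      refine (ih _ hlt hle rfl).trans ?_
      have := sub_nonneg.2 (hφ hle)
      gcongr
    have hjk_le : ‖A j k - A j (j + 1) - A (j + 1) k‖ ≤ C * (φ k - φ i) ^ θ := by
      refine (hA j (j + 1) k j.le_succ hjk).trans ?_
      have := sub_nonneg.2 (hφ hjk.le)
      gcongr
      exact hφ hij
    calc _ ≤ C * (sewingConst θ * ((φ k - φ i) / 2) ^ θ)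
            + C * (sewingConst θ * ((φ k - φ i) / 2) ^ θ)
            + C * (φ k - φ i) ^ θ + C * (φ k - φ i) ^ θ := by
          rw [hsplit]
          exact norm_add_le_of_le (norm_add_le_of_le (norm_add_le_of_le
            (ih_half hij (by omega) (by linarith)) (ih_half hjk (by omega) (by linarith)))
            (hA i j k hij hjk.le)) hjk_le
      _ = C * (sewingConst θ * (φ k - φ i) ^ θ) := by
          rw [← two_mul_sewingConst_mul_half_rpow_add hθ hω]
          ring

lemma sum_le_pVar {f : ℝ → ℝ} {p a b : ℝ} {n : ℕ} {t : Fin (n + 1) → ℝ} (ht : StrictMono t)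
    (hmem : ∀ i, t i ∈ Icc a b) :
    ∑ i : Fin n, ENNReal.ofReal (|f (t i.succ) - f (t i.castSucc)| ^ p) ≤ pVar f p a b :=
  le_iSup_of_le n (le_iSup_of_le t (le_iSup_of_le ht (le_iSup_of_le hmem le_rfl)))

lemma pVar_anti_left (f : ℝ → ℝ) (p b : ℝ) {s t : ℝ} (hst : s ≤ t) :
    pVar f p t b ≤ pVar f p s b :=
  iSup_le fun _ ↦ iSup_le fun _ ↦ iSup_le fun hu ↦ iSup_le fun hmem ↦
    sum_le_pVar hu fun i ↦ Icc_subset_Icc_left hst (hmem i)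

lemma ofReal_add_sum_le_pVar {f : ℝ → ℝ} {p a b x : ℝ} {n : ℕ} {u : Fin (n + 1) → ℝ}
    (hu : StrictMono u) (hmem : ∀ i, u i ∈ Icc a b) (hx : x ∈ Icc a b) (hxu : x < u 0) :
    ENNReal.ofReal (|f (u 0) - f x| ^ p)
      + ∑ i : Fin n, ENNReal.ofReal (|f (u i.succ) - f (u i.castSucc)| ^ p) ≤ pVar f p a b := by
  have h := sum_le_pVar (f := f) (p := p) (hu.vecCons hxu) (Fin.cons hx hmem)
  simpa [Fin.sum_univ_succ, ← Fin.succ_castSucc] using h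

lemma ofReal_add_sum_le_pVar_of_lt {f : ℝ → ℝ} {p s t b : ℝ} (hst : s < t) (htb : t ≤ b) {n : ℕ}
    {u : Fin (n + 1) → ℝ} (hu : StrictMono u) (hmem : ∀ i, u i ∈ Icc t b) :
    ENNReal.ofReal (|f t - f s| ^ p)
      + ∑ i : Fin n, ENNReal.ofReal (|f (u i.succ) - f (u i.castSucc)| ^ p) ≤ pVar f p s b := by
  have hmem' : ∀ i, u i ∈ Icc s b := fun i ↦ Icc_subset_Icc_left hst.le (hmem i)
  have hs : s ∈ Icc s b := ⟨le_rfl, hst.le.trans htb⟩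
  rcases (hmem 0).1.eq_or_lt with rfl | hlt
  · exact ofReal_add_sum_le_pVar hu hmem' hs hst
  · have h := ofReal_add_sum_le_pVar (f := f) (p := p) (hu.vecCons hlt)
      (Fin.cons (α := fun _ ↦ _) ⟨hst.le, htb⟩ hmem') hs hst
    rw [Fin.sum_univ_succ] at h
    simp only [Matrix.cons_val_zero, Matrix.cons_val_succ, ← Fin.succ_castSucc,
      Fin.castSucc_zero] at h
    exact (add_le_add_right le_add_self _).trans h

lemma ofReal_add_pVar_le {f : ℝ → ℝ} {p s t b : ℝ} (hst : s < t) (htb : t ≤ b) :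
    ENNReal.ofReal (|f t - f s| ^ p) + pVar f p t b ≤ pVar f p s b := by
  have hsingle : ENNReal.ofReal (|f t - f s| ^ p) ≤ pVar f p s b := by
    simpa using ofReal_add_sum_le_pVar_of_lt (f := f) (p := p) hst htb
      (Subsingleton.strictMono fun _ : Fin 1 ↦ t) fun _ ↦ ⟨le_rfl, htb⟩
  have hcancel := ENNReal.cancel_of_ne (ENNReal.ofReal_ne_top (r := |f t - f s| ^ p))
  rw [← hcancel.le_tsub_iff_left hsingle]
  refine iSup_le fun n ↦ iSup_le fun u ↦ iSup_le fun hu ↦ iSup_le fun hmem ↦ ?_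
  rw [hcancel.le_tsub_iff_left hsingle]
  exact ofReal_add_sum_le_pVar_of_lt hst htb hu hmem

/-- `F` controls the `p`-variation of `f` on `S`: the `p`-th powers of the increments of `f` are
bounded by the increments of `F`. This replaces two-variable controls `ω(s, t)` by those of the
additive form `F t - F s`. -/
def IsVariationControl (F f : ℝ → ℝ) (p : ℝ) (S : Set ℝ) : Prop :=
  ∀ ⦃s⦄, s ∈ S → ∀ ⦃t⦄, t ∈ S → s ≤ t → |f t - f s| ^ p ≤ F t - F s

theorem exists_isVariationControl_of_pVar_lt_top {f : ℝ → ℝ} {p a b : ℝ} (hp : 0 < p)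
    (hf : pVar f p a b < ⊤) : ∃ F, IsVariationControl F f p (Icc a b) := by
  refine ⟨fun x ↦ -(pVar f p x b).toReal, fun s hs t ht hst ↦ ?_⟩
  have hfin : ∀ x ∈ Icc a b, pVar f p x b ≠ ⊤ := fun x hx ↦
    ((pVar_anti_left f p b hx.1).trans_lt hf).ne
  rcases hst.eq_or_lt with rfl | hlt
  · simp [Real.zero_rpow hp.ne']
  · have h := ENNReal.toReal_mono (hfin s hs) (ofReal_add_pVar_le (f := f) (p := p) hlt ht.2)
    rw [ENNReal.toReal_add ENNReal.ofReal_ne_top (hfin t ht),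
      ENNReal.toReal_ofReal (by positivity)] at h
    linarith

namespace IsVariationControl

variable {F G f : ℝ → ℝ} {p : ℝ} {S : Set ℝ}

lemma monotoneOn (h : IsVariationControl F f p S) : MonotoneOn F S := fun _ hx _ hy hxy ↦
  sub_nonneg.1 ((Real.rpow_nonneg (abs_nonneg _) p).trans (h hx hy hxy))

lemma add_monotoneOn (h : IsVariationControl F f p S) (hG : MonotoneOn G S) :
    IsVariationControl (F + G) f p S := fun x hx y hy hxy ↦ by
  change _ ≤ F y + G y - (F x + G x)
  linarith [h hx hy hxy, hG hx hy hxy]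

lemma abs_sub_le (h : IsVariationControl F f p S) (hp : 0 < p) {x y u v : ℝ}
    (hxy : Icc x y ⊆ S) (hu : u ∈ Icc x y) (hv : v ∈ Icc x y) :
    |f u - f v| ≤ (F y - F x) ^ (1 / p) := by
  wlog hvu : v ≤ u generalizing u v
  · rw [abs_sub_comm]
    exact this hv hu (le_of_not_ge hvu)
  have hx : x ∈ S := hxy ⟨le_rfl, hu.1.trans hu.2⟩
  have hy : y ∈ S := hxy ⟨hu.1.trans hu.2, le_rfl⟩
  have hpow : |f u - f v| ^ p ≤ F y - F x := by
    linarith [h (hxy hv) (hxy hu) hvu, h.monotoneOn hx (hxy hv) hv.1,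
      h.monotoneOn (hxy hu) hy hu.2]
  have hω : 0 ≤ F y - F x := (Real.rpow_nonneg (abs_nonneg _) p).trans hpow
  rwa [one_div, Real.le_rpow_inv_iff_of_pos (abs_nonneg _) hω hp]

end IsVariationControl

lemma exists_mem_nhdsWithin_forall_dist_lt {X Y : Type*} [TopologicalSpace X]
    [PseudoMetricSpace Y] {f : X → Y} {K : Set X} {x : X} (hf : ContinuousWithinAt f K x) {ε : ℝ}
    (hε : 0 < ε) : ∃ U ∈ nhdsWithin x K, ∀ u ∈ U, ∀ v ∈ U, dist (f u) (f v) < ε :=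
  ⟨f ⁻¹' Metric.ball (f x) (ε / 2), hf (Metric.ball_mem_nhds _ (half_pos hε)),
    fun u hu v hv ↦ by
      linarith [dist_triangle_right (f u) (f v) (f x), Metric.mem_ball.1 hu, Metric.mem_ball.1 hv]⟩

lemma exists_pos_forall_dist_lt_or_of_isCompact {X Y Z : Type*} [PseudoMetricSpace X]
    [PseudoMetricSpace Y] [PseudoMetricSpace Z] {K : Set X} (hK : IsCompact K) {f : X → Y}
    {g : X → Z} (hfg : ∀ x ∈ K, ContinuousWithinAt f K x ∨ ContinuousWithinAt g K x) {ε : ℝ}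
    (hε : 0 < ε) : ∃ δ > 0, ∀ x ∈ K,
      (∀ u ∈ Metric.ball x δ ∩ K, ∀ v ∈ Metric.ball x δ ∩ K, dist (f u) (f v) < ε) ∨
      ∀ u ∈ Metric.ball x δ ∩ K, ∀ v ∈ Metric.ball x δ ∩ K, dist (g u) (g v) < ε := by
  have hloc : ∀ x ∈ K, ∃ U ∈ nhdsWithin x K,
      (∀ u ∈ U, ∀ v ∈ U, dist (f u) (f v) < ε) ∨ ∀ u ∈ U, ∀ v ∈ U, dist (g u) (g v) < ε := by
    intro x hx
    rcases hfg x hx with hf | hg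
    · obtain ⟨U, hU, hosc⟩ := exists_mem_nhdsWithin_forall_dist_lt hf hε
      exact ⟨U, hU, .inl hosc⟩
    · obtain ⟨U, hU, hosc⟩ := exists_mem_nhdsWithin_forall_dist_lt hg hε
      exact ⟨U, hU, .inr hosc⟩
  choose U hU hosc using hloc
  obtain ⟨δ, hδ, hball⟩ := Metric.uniformity_basis_dist.lebesgue_number_lemma_nhdsWithin' hK hU
  refine ⟨δ, hδ, fun x hx ↦ ?_⟩
  obtain ⟨y, hy⟩ := hball x hx
  rw [Metric.ball_eq_ball'] at hy
  exact (hosc y y.2).imp (fun h u hu v hv ↦ h u (hy hu) v (hy hv))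
    fun h u hu v hv ↦ h u (hy hu) v (hy hv)

/-- The smallness condition on `f` and `g` that drives Young's estimate: on subintervals of
`[a, b]` shorter than `δ`, products of an increment of `f` with an increment of `g` are at most
`C` times the `θ`-th power of the increment of `F`. -/
def IncrementMulBound (f g F : ℝ → ℝ) (a b δ C θ : ℝ) : Prop :=
  ∀ ⦃x y⦄, a ≤ x → y ≤ b → y - x < δ → ∀ ⦃u⦄, u ∈ Icc x y → ∀ ⦃v⦄, v ∈ Icc x y →
    ∀ ⦃w⦄, w ∈ Icc x y → ∀ ⦃z⦄, z ∈ Icc x y → |f u - f v| * |g w - g z| ≤ C * (F y - F x) ^ θ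

lemma exists_pos_abs_sub_mul_abs_sub_le {f g : ℝ → ℝ} {a b A B : ℝ} (hfg : NoCommonDiscont f g a b)
    (hA : ∀ u ∈ Icc a b, ∀ v ∈ Icc a b, |f u - f v| ≤ A)
    (hB : ∀ u ∈ Icc a b, ∀ v ∈ Icc a b, |g u - g v| ≤ B) {η : ℝ} (hη : 0 < η) :
    ∃ δ > 0, ∀ ⦃x y⦄, a ≤ x → y ≤ b → y - x < δ → ∀ ⦃u⦄, u ∈ Icc x y → ∀ ⦃v⦄, v ∈ Icc x y →
      ∀ ⦃w⦄, w ∈ Icc x y → ∀ ⦃z⦄, z ∈ Icc x y → |f u - f v| * |g w - g z| ≤ η := by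
  obtain ⟨c, hc, hcη⟩ := exists_pos_mul_lt hη (max A B)
  obtain ⟨δ, hδ, hosc⟩ := exists_pos_forall_dist_lt_or_of_isCompact isCompact_Icc hfg hc
  refine ⟨δ, hδ, fun x y hax hyb hlt u hu v hv w hw z hz ↦ ?_⟩
  have hsub : ∀ r ∈ Icc x y, r ∈ Metric.ball x δ ∩ Icc a b := fun r hr ↦ by
    refine ⟨?_, hax.trans hr.1, hr.2.trans hyb⟩
    rw [Metric.mem_ball, Real.dist_eq, abs_of_nonneg (sub_nonneg.2 hr.1)]
    linarith [hr.2]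
  have hx : x ∈ Icc a b := (hsub x ⟨le_rfl, hu.1.trans hu.2⟩).2
  have hf : |f u - f v| ≤ max A B := le_max_of_le_left (hA u (hsub u hu).2 v (hsub v hv).2)
  have hg : |g w - g z| ≤ max A B := le_max_of_le_right (hB w (hsub w hw).2 z (hsub z hz).2)
  refine le_trans ?_ hcη.le
  rcases hosc x hx with hosc | hosc
  · rw [mul_comm]
    exact mul_le_mul hg (hosc u (hsub u hu) v (hsub v hv)).le (abs_nonneg _)
      ((abs_nonneg _).trans hg)
  · exact mul_le_mul hf (hosc w (hsub w hw) z (hsub z hz)).le (abs_nonneg _)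
      ((abs_nonneg _).trans hf)

theorem exists_pos_incrementMulBound {f g F : ℝ → ℝ} {a b p q θ : ℝ}
    (hfg : NoCommonDiscont f g a b) (hp : 0 < p) (hq : 0 < q)
    (hf : IsVariationControl F f p (Icc a b)) (hg : IsVariationControl F g q (Icc a b))
    (hθ₀ : 0 ≤ θ) (hθ : θ < 1 / p + 1 / q) {ε : ℝ} (hε : 0 < ε) :
    ∃ δ > 0, IncrementMulBound f g F a b δ ε θ := by
  have hσ : 0 < 1 / p + 1 / q := by positivity
  set l := θ / (1 / p + 1 / q) with hl
  have hl₀ : 0 ≤ l := by positivity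
  have hl₁ : 0 < 1 - l := sub_pos.2 ((div_lt_one hσ).2 hθ)
  obtain ⟨δ, hδ, hsmall⟩ := exists_pos_abs_sub_mul_abs_sub_le hfg
    (fun u hu v hv ↦ hf.abs_sub_le hp Subset.rfl hu hv)
    (fun u hu v hv ↦ hg.abs_sub_le hq Subset.rfl hu hv) (Real.rpow_pos_of_pos hε (1 - l)⁻¹)
  refine ⟨δ, hδ, fun x y hax hyb hlt u hu v hv w hw z hz ↦ ?_⟩
  have hxy : x ≤ y := hu.1.trans hu.2
  have hsub : Icc x y ⊆ Icc a b := Icc_subset_Icc hax hyb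
  have hω : 0 ≤ F y - F x :=
    sub_nonneg.2 (hf.monotoneOn (hsub ⟨le_rfl, hxy⟩) (hsub ⟨hxy, le_rfl⟩) hxy)
  have hprod : |f u - f v| * |g w - g z| ≤ (F y - F x) ^ (1 / p + 1 / q) := by
    rw [Real.rpow_add_of_nonneg hω (by positivity) (by positivity)]
    exact mul_le_mul (hf.abs_sub_le hp hsub hu hv) (hg.abs_sub_le hq hsub hw hz) (abs_nonneg _)
      (Real.rpow_nonneg hω _)
  calc |f u - f v| * |g w - g z|
      ≤ (ε ^ (1 - l)⁻¹) ^ (1 - l) * (F y - F x) ^ ((1 / p + 1 / q) * l) :=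
        le_rpow_mul_rpow_of_le_of_le_rpow (by positivity) hω hl₀ (sub_pos.1 hl₁).le
          (hsmall hax hyb hlt hu hv hw hz) hprod
    _ = ε * (F y - F x) ^ θ := by
        rw [Real.rpow_inv_rpow hε.le hl₁.ne', hl, mul_div_cancel₀ _ hσ.ne']

/-- `t` and `ξ` are the division points and the tags of a tagged partition of `[a, b]` into `n`
intervals of length less than `δ`, possibly degenerate. Both are sequences indexed by `ℕ`, with `t`
constantly equal to `b` from index `n` on, so that partial sums over `Finset.range` apply. -/
structure IsTaggedPartition (a b δ : ℝ) (n : ℕ) (t ξ : ℕ → ℝ) : Prop where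
  monotone : Monotone t
  zero_eq : t 0 = a
  eq_of_le : ∀ k, n ≤ k → t k = b
  tag_mem : ∀ k, ξ k ∈ Icc (t k) (t (k + 1))
  mesh_lt : ∀ k, t (k + 1) - t k < δ

namespace IsTaggedPartition

variable {a b δ : ℝ} {n : ℕ} {t ξ : ℕ → ℝ}

lemma left_le (h : IsTaggedPartition a b δ n t ξ) (k : ℕ) : a ≤ t k :=
  h.zero_eq ▸ h.monotone k.zero_le

lemma le_right (h : IsTaggedPartition a b δ n t ξ) (k : ℕ) : t k ≤ b :=
  h.eq_of_le _ (le_max_right k n) ▸ h.monotone (le_max_left k n)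

lemma mono {δ' : ℝ} (h : IsTaggedPartition a b δ n t ξ) (hδ : δ ≤ δ') :
    IsTaggedPartition a b δ' n t ξ :=
  { h with mesh_lt := fun k ↦ (h.mesh_lt k).trans_le hδ }

end IsTaggedPartition

lemma exists_isTaggedPartition {a b δ : ℝ} (hab : a ≤ b) (hδ : 0 < δ) :
    ∃ n t ξ, IsTaggedPartition a b δ n t ξ := by
  have hmono : Monotone fun k ↦ (Icc.addNSMul hab (δ / 2) k : ℝ) :=
    Icc.monotone_addNSMul hab (half_pos hδ).le
  obtain ⟨n, hn⟩ := Icc.addNSMul_eq_right hab (half_pos hδ)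
  refine ⟨n, fun k ↦ Icc.addNSMul hab (δ / 2) k, fun k ↦ Icc.addNSMul hab (δ / 2) k,
    hmono, Icc.addNSMul_zero hab, hn, fun k ↦ ⟨le_rfl, hmono k.le_succ⟩, fun k ↦ ?_⟩
  have hstep := Icc.abs_sub_addNSMul_le hab (half_pos hδ).le k
    (t := Icc.addNSMul hab (δ / 2) (k + 1)) ⟨hmono k.le_succ, le_rfl⟩
  linarith [le_abs_self ((Icc.addNSMul hab (δ / 2) (k + 1) : ℝ) - Icc.addNSMul hab (δ / 2) k)]

lemma exists_isTaggedPartition_of_strictMono {a b δ : ℝ} (hδ : 0 < δ) {n : ℕ}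
    {t : Fin (n + 1) → ℝ} {ξ : Fin n → ℝ} (ht : StrictMono t) (ht₀ : t 0 = a)
    (htn : t (Fin.last n) = b) (hξ : ∀ i : Fin n, t i.castSucc ≤ ξ i ∧ ξ i ≤ t i.succ)
    (hmesh : ∀ i : Fin n, t i.succ - t i.castSucc < δ) :
    ∃ t' ξ' : ℕ → ℝ, IsTaggedPartition a b δ n t' ξ' ∧
      (∀ i : Fin n, ξ' i = ξ i) ∧ ∀ i : Fin (n + 1), t' i = t i := by
  set t' : ℕ → ℝ := fun k ↦ t (Fin.clamp k n)
  have ht'_of_lt : ∀ k (hk : k < n),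
      t' k = t (Fin.castSucc ⟨k, hk⟩) ∧ t' (k + 1) = t (Fin.succ ⟨k, hk⟩) := fun k hk ↦
    ⟨congrArg t (Fin.ext (min_eq_left hk.le)), congrArg t (Fin.ext (min_eq_left hk))⟩
  have ht'_of_le : ∀ k, n ≤ k → t' k = b := fun k hk ↦
    (congrArg t (Fin.clamp_eq_last k n hk)).trans htn
  refine ⟨t', fun k ↦ if hk : k < n then ξ ⟨k, hk⟩ else b,
    ⟨ht.monotone.comp Fin.clamp_monotone, ?_, ht'_of_le, fun k ↦ ?_, fun k ↦ ?_⟩,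
    fun i ↦ dif_pos i.2, fun i ↦ congrArg t (Fin.ext (min_eq_left i.is_le))⟩
  · exact (congrArg t (Fin.ext (Nat.zero_min n))).trans ht₀
  · by_cases hk : k < n
    · rw [dif_pos hk, (ht'_of_lt k hk).1, (ht'_of_lt k hk).2]
      exact hξ ⟨k, hk⟩
    · rw [dif_neg hk, ht'_of_le k (not_lt.1 hk), ht'_of_le (k + 1) (by omega)]
      exact ⟨le_rfl, le_rfl⟩
  · by_cases hk : k < n
    · rw [(ht'_of_lt k hk).1, (ht'_of_lt k hk).2]
      exact hmesh ⟨k, hk⟩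
    · rwa [ht'_of_le k (not_lt.1 hk), ht'_of_le (k + 1) (by omega), sub_self]

/-- The Riemann–Stieltjes sum of `f` against `g` over the first `n` intervals. -/
def rsSum (f g : ℝ → ℝ) (n : ℕ) (t ξ : ℕ → ℝ) : ℝ :=
  ∑ k ∈ Finset.range n, f (ξ k) * (g (t (k + 1)) - g (t k))

lemma rsIntegral_of_forall_isTaggedPartition {f g : ℝ → ℝ} {a b I : ℝ}
    (h : ∀ ε > 0, ∃ δ > 0, ∀ n t ξ, IsTaggedPartition a b δ n t ξ → |rsSum f g n t ξ - I| < ε) :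
    RSIntegral f g a b I := by
  intro ε hε
  obtain ⟨δ, hδ, hsum⟩ := h ε hε
  refine ⟨δ, hδ, fun n t ξ ht ht₀ htn hξ hmesh ↦ ?_⟩
  obtain ⟨t', ξ', hpart, hξ', ht'⟩ :=
    exists_isTaggedPartition_of_strictMono hδ ht ht₀ htn hξ hmesh
  convert hsum n t' ξ' hpart using 3
  rw [rsSum, ← Fin.sum_univ_eq_sum_range fun k ↦ f (ξ' k) * (g (t' (k + 1)) - g (t' k))]
  exact Finset.sum_congr rfl fun i _ ↦ by
    rw [hξ', ← ht', ← ht', Fin.val_succ, Fin.val_castSucc]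

theorem exists_rsIntegral_of_forall_abs_rsSum_sub_rsSum_le {f g : ℝ → ℝ} {a b : ℝ} (hab : a ≤ b)
    (h : ∀ ε > 0, ∃ δ > 0, ∀ n t ξ m s η, IsTaggedPartition a b δ n t ξ →
      IsTaggedPartition a b δ m s η → |rsSum f g n t ξ - rsSum f g m s η| ≤ ε) :
    ∃ I, RSIntegral f g a b I := by
  choose n t ξ hpart using fun N : ℕ ↦
    exists_isTaggedPartition hab (Nat.one_div_pos_of_nat (α := ℝ) (n := N))
  have hfine : ∀ δ > 0, ∃ N, ∀ M ≥ N, IsTaggedPartition a b δ (n M) (t M) (ξ M) := fun δ hδ ↦ by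
    obtain ⟨N, hN⟩ := exists_nat_one_div_lt hδ
    exact ⟨N, fun M hM ↦ (hpart M).mono ((Nat.one_div_le_one_div hM).trans hN.le)⟩
  have hcauchy : CauchySeq fun N ↦ rsSum f g (n N) (t N) (ξ N) := by
    refine Metric.cauchySeq_iff'.2 fun ε hε ↦ ?_
    obtain ⟨δ, hδ, hclose⟩ := h (ε / 2) (half_pos hε)
    obtain ⟨N, hN⟩ := hfine δ hδ
    exact ⟨N, fun M hM ↦
      (hclose _ _ _ _ _ _ (hN M hM) (hN N le_rfl)).trans_lt (half_lt_self hε)⟩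
  obtain ⟨I, hI⟩ := cauchySeq_tendsto_of_complete hcauchy
  refine ⟨I, rsIntegral_of_forall_isTaggedPartition fun ε hε ↦ ?_⟩
  obtain ⟨δ, hδ, hclose⟩ := h (ε / 2) (half_pos hε)
  obtain ⟨N, hN⟩ := hfine δ hδ
  refine ⟨δ, hδ, fun m s η hs ↦ lt_of_le_of_lt ?_ (half_lt_self hε)⟩
  exact le_of_tendsto (hI.const_sub _).abs
    (eventually_atTop.2 ⟨N, fun M hM ↦ hclose _ _ _ _ _ _ hs (hN M hM)⟩)

lemma IncrementMulBound.abs_mul_sub_sum_le {f g F : ℝ → ℝ} {a b δ C θ : ℝ}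
    (h : IncrementMulBound f g F a b δ C θ) (hF : MonotoneOn F (Icc a b)) (hC : 0 ≤ C) (hθ : 1 < θ)
    {c d : ℝ} (hac : a ≤ c) (hdb : d ≤ b) (hcd : d - c < δ) {x : ℝ} (hx : x ∈ Icc c d)
    {s : ℕ → ℝ} {m : ℕ} (hs : Monotone s) (hmem : ∀ j, s j ∈ Icc c d) (hs₀ : s 0 = c)
    (hsm : s m = d) :
    |f x * (g d - g c) - ∑ j ∈ Finset.range m, f (s j) * (g (s (j + 1)) - g (s j))|
      ≤ C * ((1 + sewingConst θ) * (F d - F c) ^ θ) := by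
  have hc : c ∈ Icc c d := ⟨le_rfl, hx.1.trans hx.2⟩
  have hd : d ∈ Icc c d := ⟨hx.1.trans hx.2, le_rfl⟩
  have hφ : Monotone fun j ↦ F (s j) := fun i j hij ↦
    hF (Icc_subset_Icc hac hdb (hmem i)) (Icc_subset_Icc hac hdb (hmem j)) (hs hij)
  have htag : |(f x - f c) * (g d - g c)| ≤ C * (F d - F c) ^ θ := by
    rw [abs_mul]
    exact h hac hdb hcd hx hc hd hc
  have hsew : |f c * (g d - g c) - ∑ j ∈ Finset.range m, f (s j) * (g (s (j + 1)) - g (s j))|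
      ≤ C * (sewingConst θ * (F d - F c) ^ θ) := by
    have hsew := norm_sub_sum_Ico_le_of_norm_sub_sub_le
      (A := fun i j ↦ f (s i) * (g (s j) - g (s i))) hφ hC hθ (fun i j k hij hjk ↦ ?_) m.zero_le
    · simpa only [hs₀, hsm, Nat.Ico_zero_eq_range, Real.norm_eq_abs] using hsew
    · calc ‖f (s i) * (g (s k) - g (s i)) - f (s i) * (g (s j) - g (s i))
            - f (s j) * (g (s k) - g (s j))‖
          = |f (s i) - f (s j)| * |g (s k) - g (s j)| := by
            rw [← abs_mul, Real.norm_eq_abs]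
            ring_nf
        _ ≤ C * (F (s k) - F (s i)) ^ θ :=
            h (hac.trans (hmem i).1) ((hmem k).2.trans hdb)
              (by linarith [(hmem i).1, (hmem k).2])
              ⟨le_rfl, hs (hij.trans hjk)⟩ ⟨hs hij, hs hjk⟩ ⟨hs (hij.trans hjk), le_rfl⟩
              ⟨hs hij, hs hjk⟩
  calc |f x * (g d - g c) - ∑ j ∈ Finset.range m, f (s j) * (g (s (j + 1)) - g (s j))|
      = |(f x - f c) * (g d - g c) + (f c * (g d - g c)
          - ∑ j ∈ Finset.range m, f (s j) * (g (s (j + 1)) - g (s j)))| := by ring_nf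
    _ ≤ C * (F d - F c) ^ θ + C * (sewingConst θ * (F d - F c) ^ θ) :=
        (abs_add_le _ _).trans (add_le_add htag hsew)
    _ = C * ((1 + sewingConst θ) * (F d - F c) ^ θ) := by ring

/-- The sum of left-endpoint terms of `f` against `g` over the common refinement of the first `n`
intervals of `t` and the first `m` intervals of `s`. Projecting `[s j, s (j + 1)]` to
`[t i, t (i + 1)]` gives the intersection of the two, or a single point, which contributes `0`. -/
def refinementSum (f g : ℝ → ℝ) (n m : ℕ) (t s : ℕ → ℝ) : ℝ :=
  ∑ i ∈ Finset.range n, ∑ j ∈ Finset.range m, f (max (t i) (min (t (i + 1)) (s j))) *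
    (g (max (t i) (min (t (i + 1)) (s (j + 1)))) - g (max (t i) (min (t (i + 1)) (s j))))

lemma mul_sub_max_min_comm {α R : Type*} [LinearOrder α] [NonUnitalNonAssocRing R] (f g : α → R)
    {x x' y y' : α} (hx : x ≤ x') (hy : y ≤ y') :
    f (max x (min x' y)) * (g (max x (min x' y')) - g (max x (min x' y)))
      = f (max y (min y' x)) * (g (max y (min y' x')) - g (max y (min y' x))) := by
  rcases le_total x' y with hxy | hyx
  · simp [hxy, hxy.trans hy, hx, hx.trans hxy, hx.trans (hxy.trans hy)]
  rcases le_total y' x with hyx' | hxy'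
  · simp [hyx', hyx'.trans hx, hy, hy.trans hyx', hy.trans (hyx'.trans hx)]
  · rw [min_eq_right hyx, min_eq_right hxy', max_comm y x, min_comm y' x',
      max_eq_right (le_min hx hxy'), max_eq_right (le_min hyx hy)]

lemma refinementSum_comm (f g : ℝ → ℝ) {n m : ℕ} {t s : ℕ → ℝ} (ht : Monotone t)
    (hs : Monotone s) : refinementSum f g n m t s = refinementSum f g m n s t := by
  unfold refinementSum
  rw [Finset.sum_comm]
  exact Finset.sum_congr rfl fun j _ ↦ Finset.sum_congr rfl fun i _ ↦
    mul_sub_max_min_comm f g (ht i.le_succ) (hs j.le_succ)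

lemma abs_rsSum_sub_refinementSum_le {f g F : ℝ → ℝ} {a b δ C θ : ℝ}
    (h : IncrementMulBound f g F a b δ C θ) (hF : MonotoneOn F (Icc a b)) (hC : 0 ≤ C) (hθ : 1 < θ)
    {n m : ℕ} {t ξ s : ℕ → ℝ} (ht : IsTaggedPartition a b δ n t ξ) (hs : Monotone s)
    (hs₀ : s 0 = a) (hsm : s m = b) :
    |rsSum f g n t ξ - refinementSum f g n m t s|
      ≤ C * ((1 + sewingConst θ) * (F b - F a) ^ θ) := by
  have hmem : ∀ i, t i ∈ Icc a b := fun i ↦ ⟨ht.left_le i, ht.le_right i⟩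
  have hK : 0 ≤ 1 + sewingConst θ := by linarith [sewingConst_pos hθ]
  have hlocal : ∀ i, |f (ξ i) * (g (t (i + 1)) - g (t i)) -
      ∑ j ∈ Finset.range m, f (max (t i) (min (t (i + 1)) (s j))) *
        (g (max (t i) (min (t (i + 1)) (s (j + 1)))) - g (max (t i) (min (t (i + 1)) (s j))))|
      ≤ C * ((1 + sewingConst θ) * (F (t (i + 1)) - F (t i)) ^ θ) := by
    intro i
    have hle := ht.monotone i.le_succ
    refine h.abs_mul_sub_sum_le hF hC hθ (hmem i).1 (hmem _).2 (ht.mesh_lt i) (ht.tag_mem i)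
      (s := fun j ↦ max (t i) (min (t (i + 1)) (s j)))
      (fun j k hjk ↦ max_le_max_left _ (min_le_min_left _ (hs hjk)))
      (fun j ↦ ⟨le_max_left _ _, max_le hle (min_le_left _ _)⟩) ?_ ?_
    · rw [hs₀, min_eq_right (hmem _).1, max_eq_left (hmem i).1]
    · rw [hsm, min_eq_left (hmem _).2, max_eq_right hle]
  calc |rsSum f g n t ξ - refinementSum f g n m t s|
      ≤ ∑ i ∈ Finset.range n, C * ((1 + sewingConst θ) * (F (t (i + 1)) - F (t i)) ^ θ) := by
        rw [rsSum, refinementSum, ← Finset.sum_sub_distrib]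
        exact (Finset.abs_sum_le_sum_abs _ _).trans (Finset.sum_le_sum fun i _ ↦ hlocal i)
    _ = C * ((1 + sewingConst θ) * ∑ i ∈ Finset.range n, (F (t (i + 1)) - F (t i)) ^ θ) := by
        simp only [Finset.mul_sum]
    _ ≤ C * ((1 + sewingConst θ) * (F (t n) - F (t 0)) ^ θ) := by
        gcongr
        exact sum_sub_rpow_le_sub_rpow (φ := fun i ↦ F (t i))
          (fun i j hij ↦ hF (hmem i) (hmem j) (ht.monotone hij)) hθ.le n
    _ = C * ((1 + sewingConst θ) * (F b - F a) ^ θ) := by rw [ht.zero_eq, ht.eq_of_le n le_rfl]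

theorem exists_rsIntegral_of_forall_incrementMulBound {f g F : ℝ → ℝ} {a b θ : ℝ} (hab : a ≤ b)
    (hF : MonotoneOn F (Icc a b)) (hθ : 1 < θ)
    (h : ∀ ε > 0, ∃ δ > 0, IncrementMulBound f g F a b δ ε θ) : ∃ I, RSIntegral f g a b I := by
  refine exists_rsIntegral_of_forall_abs_rsSum_sub_rsSum_le hab fun ε hε ↦ ?_
  obtain ⟨c, hc, hcε⟩ :=
    exists_pos_mul_lt (half_pos hε) ((1 + sewingConst θ) * (F b - F a) ^ θ)
  obtain ⟨δ, hδ, hbound⟩ := h c hc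
  refine ⟨δ, hδ, fun n t ξ m s η ht hs ↦ ?_⟩
  have ht_le := abs_rsSum_sub_refinementSum_le hbound hF hc.le hθ ht hs.monotone hs.zero_eq
    (hs.eq_of_le m le_rfl)
  have hs_le := abs_rsSum_sub_refinementSum_le hbound hF hc.le hθ hs ht.monotone ht.zero_eq
    (ht.eq_of_le n le_rfl)
  rw [refinementSum_comm f g hs.monotone ht.monotone, abs_sub_comm] at hs_le
  linarith [abs_sub_le (rsSum f g n t ξ) (refinementSum f g n m t s) (rsSum f g m s η)]

theorem rs_integral_exists_of_finite_p_q_variation_general {a b p q : ℝ} {f g : ℝ → ℝ}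
    (hab : a ≤ b) (hp : 0 < p) (hq : 0 < q) (hpq : 1 < 1 / p + 1 / q)
    (hfg : NoCommonDiscont f g a b) (hf : pVar f p a b < ⊤) (hg : pVar g q a b < ⊤) :
    ∃ I, RSIntegral f g a b I := by
  obtain ⟨F, hF⟩ := exists_isVariationControl_of_pVar_lt_top hp hf
  obtain ⟨G, hG⟩ := exists_isVariationControl_of_pVar_lt_top hq hg
  have hFG : IsVariationControl (F + G) f p (Icc a b) := hF.add_monotoneOn hG.monotoneOn
  have hGF : IsVariationControl (F + G) g q (Icc a b) :=
    add_comm G F ▸ hG.add_monotoneOn hF.monotoneOn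
  obtain ⟨θ, hθ, hθpq⟩ := exists_between hpq
  exact exists_rsIntegral_of_forall_incrementMulBound hab hFG.monotoneOn hθ fun ε hε ↦
    exists_pos_incrementMulBound hfg hp hq hFG hGF (zero_le_one.trans hθ.le) hθpq hε

/-- Young's theorem: existence of the Riemann–Stieltjes integral for integrand of
finite `p`-variation and integrator of finite `q`-variation, `1/p + 1/q > 1`. -/
theorem rs_integral_exists_of_finite_p_q_variation
    (a b : ℝ) (hab : a < b) (p q : ℝ) (hp : 1 < p) (hq : 1 < q)
    (hpq : 1 / p + 1 / q > 1)
    (f g : ℝ → ℝ) (hfg : NoCommonDiscont f g a b)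
    (hf : pVar f p a b < ⊤) (hg : pVar g q a b < ⊤) :
    ∃ I : ℝ, RSIntegral f g a b I :=
  rs_integral_exists_of_finite_p_q_variation_general hab.le (zero_lt_one.trans hp)
    (zero_lt_one.trans hq) hpq hfg hf hg
end
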